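/- Let X ⊂ ℝ^d be a finite dataset and let S be the set of k centers returned by δ-k-means++ (first center uniform from X, each subsequent center sampled from the distribution (1-δ)·Δ(x,S)/Δ(X,S) + δ/|X|), for δ ∈ (0, 1/2). Then E[Δ(X,S)] ≤ 8(ln k + 2)·Δ_k(X) + (6kδ/(1-δ))·Δ₁(X). -/

import Mathlib

/-- Squared distance from `x` to the nearest center in the list `S`. -/
noncomputable def ptCost {d : ℕ} (x : EuclideanSpace ℝ (Fin d))
    (S : List (EuclideanSpace ℝ (Fin d))) : ℝ :=
  sInf ((fun c => ‖x - c‖ ^ 2) '' {c | c ∈ S})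

/-- Total clustering cost `Δ(X,S) = Σ_{x∈X} min_{c∈S} ‖x-c‖²`. -/
noncomputable def setCost {d : ℕ} (X : Finset (EuclideanSpace ℝ (Fin d)))
    (S : List (EuclideanSpace ℝ (Fin d))) : ℝ :=
  ∑ x ∈ X, ptCost x S

/-- `δ`-perturbed `D²` sampling weight:
`(1-δ)·Δ(x,S)/Δ(X,S) + δ/|X|`. -/
noncomputable def stepWeight {d : ℕ} (X : Finset (EuclideanSpace ℝ (Fin d))) (δ : ℝ)
    (S : List (EuclideanSpace ℝ (Fin d))) (x : EuclideanSpace ℝ (Fin d)) : ℝ :=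
  (1 - δ) * ptCost x S / setCost X S + δ / (X.card : ℝ)

/-- Expected final cost of `δ`-`k`-means++ after `t` further sampling steps
starting from the current list of centers. -/
noncomputable def expCost {d : ℕ} (X : Finset (EuclideanSpace ℝ (Fin d))) (δ : ℝ) :
    ℕ → List (EuclideanSpace ℝ (Fin d)) → ℝ
  | 0, S => setCost X S
  | t + 1, S => ∑ x ∈ X, stepWeight X δ S x * expCost X δ t (x :: S)

/-- Optimal `k`-means cost `Δ_k(X)`. -/
noncomputable def optCost {d : ℕ} (X : Finset (EuclideanSpace ℝ (Fin d))) (k : ℕ) : ℝ :=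
  sInf {r | ∃ C : Finset (EuclideanSpace ℝ (Fin d)),
    C.Nonempty ∧ C.card = k ∧ r = setCost X C.toList}

/-! The guarantee comes from the Voronoi partition of an optimal set of centers. A point drawn from
a part `A` with probability proportional to its current cost brings the expected cost of `A` down to
at most `8 Δ₁(A)`. So the danger is only that draws hit parts that have already been covered, and
the probability of this is the share of the total cost that the covered parts carry. A potential
function charges these misses to the covered cost, which gives the harmonic, hence logarithmic,
factor. A step of `δ`-`k`-means++ is a `D²` draw with probability `1 - δ` and a uniform draw with
probability `δ`; uniform draws are simply written off as misses, each at the price of the current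
total cost, whose mean after the uniform first draw is at most `2 Δ₁(X)`. -/

section InnerProductSpace

variable {V : Type*} [NormedAddCommGroup V] [InnerProductSpace ℝ V]

/-- The total variance `Δ₁(A)`: the sum of the squared distances to the mean (which is the junk
value `0` for empty `A`, where the sum is empty). -/
noncomputable def totalVariance (A : Finset V) : ℝ :=
  ∑ x ∈ A, ‖x - (A.card : ℝ)⁻¹ • ∑ y ∈ A, y‖ ^ 2

theorem totalVariance_nonneg (A : Finset V) : 0 ≤ totalVariance A :=
  Finset.sum_nonneg fun _ _ => sq_nonneg _

theorem sum_norm_sub_sq_eq (A : Finset V) (c : V) :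
    ∑ x ∈ A, ‖x - c‖ ^ 2
      = totalVariance A + A.card * ‖(A.card : ℝ)⁻¹ • ∑ y ∈ A, y - c‖ ^ 2 := by
  rcases A.eq_empty_or_nonempty with rfl | hA
  · simp [totalVariance]
  set m := (A.card : ℝ)⁻¹ • ∑ y ∈ A, y with hm
  have hn : (A.card : ℝ) ≠ 0 := by exact_mod_cast hA.card_ne_zero
  have hcenter : ∑ x ∈ A, (x - m) = 0 := by
    rw [Finset.sum_sub_distrib, Finset.sum_const, ← Nat.cast_smul_eq_nsmul ℝ, hm,
      smul_inv_smul₀ hn, sub_self]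
  calc ∑ x ∈ A, ‖x - c‖ ^ 2
      = ∑ x ∈ A, (‖x - m‖ ^ 2 + 2 * inner ℝ (x - m) (m - c) + ‖m - c‖ ^ 2) :=
        Finset.sum_congr rfl fun x _ => by rw [← norm_add_sq_real, sub_add_sub_cancel]
    _ = totalVariance A + 2 * inner ℝ (∑ x ∈ A, (x - m)) (m - c) + A.card * ‖m - c‖ ^ 2 := by
        rw [Finset.sum_add_distrib, Finset.sum_add_distrib, ← Finset.mul_sum, ← sum_inner,
          Finset.sum_const, nsmul_eq_mul, totalVariance]
    _ = totalVariance A + A.card * ‖m - c‖ ^ 2 := by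
        rw [hcenter, inner_zero_left, mul_zero, add_zero]

theorem totalVariance_le_sum_norm_sub_sq (A : Finset V) (c : V) :
    totalVariance A ≤ ∑ x ∈ A, ‖x - c‖ ^ 2 := by
  rw [sum_norm_sub_sq_eq]
  exact le_add_of_nonneg_right (by positivity)

theorem sum_sum_norm_sub_sq (A : Finset V) :
    ∑ x ∈ A, ∑ y ∈ A, ‖y - x‖ ^ 2 = 2 * A.card * totalVariance A := by
  have hflip : ∑ x ∈ A, ‖(A.card : ℝ)⁻¹ • ∑ y ∈ A, y - x‖ ^ 2 = totalVariance A :=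
    Finset.sum_congr rfl fun x _ => by rw [norm_sub_rev]
  simp only [sum_norm_sub_sq_eq A, Finset.sum_add_distrib, Finset.sum_const, nsmul_eq_mul,
    ← Finset.mul_sum, hflip]
  ring

end InnerProductSpace

section Cost

variable {d : ℕ} {X A : Finset (EuclideanSpace ℝ (Fin d))} {S T : List (EuclideanSpace ℝ (Fin d))}
  {x y c : EuclideanSpace ℝ (Fin d)}

theorem ptCost_nonneg (x : EuclideanSpace ℝ (Fin d)) (S : List (EuclideanSpace ℝ (Fin d))) :
    0 ≤ ptCost x S := by
  refine Real.sInf_nonneg ?_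
  rintro _ ⟨c, -, rfl⟩
  positivity

theorem ptCost_le (hc : c ∈ S) : ptCost x S ≤ ‖x - c‖ ^ 2 :=
  csInf_le (S.finite_toSet.image _).bddBelow ⟨c, hc, rfl⟩

theorem exists_ptCost_eq (x : EuclideanSpace ℝ (Fin d)) (hS : S ≠ []) :
    ∃ c ∈ S, ptCost x S = ‖x - c‖ ^ 2 := by
  obtain ⟨a, ha⟩ := List.exists_mem_of_ne_nil S hS
  have hne : ((fun c => ‖x - c‖ ^ 2) '' {c | c ∈ S}).Nonempty := ⟨_, a, ha, rfl⟩
  obtain ⟨c, hc, h⟩ := hne.csInf_mem (S.finite_toSet.image _)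
  exact ⟨c, hc, h.symm⟩

theorem ptCost_anti (hS : S ≠ []) (hST : S ⊆ T) : ptCost x T ≤ ptCost x S := by
  obtain ⟨c, hc, h⟩ := exists_ptCost_eq x hS
  exact h ▸ ptCost_le (hST hc)

theorem ptCost_le_two_mul_add (x y : EuclideanSpace ℝ (Fin d)) (hS : S ≠ []) :
    ptCost x S ≤ 2 * ptCost y S + 2 * ‖y - x‖ ^ 2 := by
  obtain ⟨c, hc, h⟩ := exists_ptCost_eq y hS
  have htriangle : ‖x - c‖ ≤ ‖y - c‖ + ‖y - x‖ := by
    simpa only [sub_sub_sub_cancel_left] using norm_sub_le (y - c) (y - x)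
  calc ptCost x S ≤ ‖x - c‖ ^ 2 := ptCost_le hc
    _ ≤ (‖y - c‖ + ‖y - x‖) ^ 2 := by gcongr
    _ ≤ 2 * (‖y - c‖ ^ 2 + ‖y - x‖ ^ 2) := add_sq_le
    _ = 2 * ptCost y S + 2 * ‖y - x‖ ^ 2 := by rw [h, mul_add]

theorem setCost_nonneg (X : Finset (EuclideanSpace ℝ (Fin d)))
    (S : List (EuclideanSpace ℝ (Fin d))) : 0 ≤ setCost X S :=
  Finset.sum_nonneg fun x _ => ptCost_nonneg x S

theorem setCost_anti (hS : S ≠ []) (hST : S ⊆ T) : setCost X T ≤ setCost X S :=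
  Finset.sum_le_sum fun _ _ => ptCost_anti hS hST

theorem setCost_cons_le (c : EuclideanSpace ℝ (Fin d)) (hS : S ≠ []) :
    setCost X (c :: S) ≤ setCost X S :=
  setCost_anti hS (List.subset_cons_self c S)

theorem setCost_singleton (X : Finset (EuclideanSpace ℝ (Fin d))) (c : EuclideanSpace ℝ (Fin d)) :
    setCost X [c] = ∑ x ∈ X, ‖x - c‖ ^ 2 := by
  simp [setCost, ptCost]

theorem sum_setCost_singleton (A : Finset (EuclideanSpace ℝ (Fin d))) :
    ∑ c ∈ A, setCost A [c] = 2 * A.card * totalVariance A := by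
  simp only [setCost_singleton, sum_sum_norm_sub_sq]

theorem card_mul_ptCost_le (A : Finset (EuclideanSpace ℝ (Fin d))) (x : EuclideanSpace ℝ (Fin d))
    (hS : S ≠ []) : A.card * ptCost x S ≤ 2 * setCost A S + 2 * setCost A [x] := by
  rw [setCost_singleton, setCost, Finset.mul_sum, Finset.mul_sum, ← Finset.sum_add_distrib,
    ← nsmul_eq_mul]
  exact Finset.card_nsmul_le_sum _ _ _ fun y _ => ptCost_le_two_mul_add x y hS

/-- `ptCost x S / setCost A S` is the law of a `D²` draw from `A`; both sides are multiplied by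
`setCost A S` to avoid the division. -/
theorem sum_ptCost_mul_setCost_cons_le (A : Finset (EuclideanSpace ℝ (Fin d))) (hS : S ≠ []) :
    ∑ x ∈ A, ptCost x S * setCost A (x :: S) ≤ setCost A S * (8 * totalVariance A) := by
  rcases A.eq_empty_or_nonempty with rfl | hA
  · simp [setCost]
  have hn : (0 : ℝ) < A.card := by exact_mod_cast hA.card_pos
  have hpoint (x : EuclideanSpace ℝ (Fin d)) :
      A.card * (ptCost x S * setCost A (x :: S)) ≤ 4 * setCost A S * setCost A [x] := by
    have hold : setCost A (x :: S) ≤ setCost A S := setCost_cons_le x hS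
    have hnew : setCost A (x :: S) ≤ setCost A [x] :=
      setCost_anti (List.cons_ne_nil x []) (by simp)
    calc A.card * (ptCost x S * setCost A (x :: S))
        = A.card * ptCost x S * setCost A (x :: S) := by ring
      _ ≤ (2 * setCost A S + 2 * setCost A [x]) * setCost A (x :: S) :=
          mul_le_mul_of_nonneg_right (card_mul_ptCost_le A x hS) (setCost_nonneg A _)
      _ = 2 * setCost A S * setCost A (x :: S) + 2 * setCost A [x] * setCost A (x :: S) := by ring
      _ ≤ 2 * setCost A S * setCost A [x] + 2 * setCost A [x] * setCost A S := by
          have := setCost_nonneg A S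
          have := setCost_nonneg A [x]
          gcongr
      _ = 4 * setCost A S * setCost A [x] := by ring
  refine le_of_mul_le_mul_left ?_ hn
  calc A.card * ∑ x ∈ A, ptCost x S * setCost A (x :: S)
      ≤ ∑ x ∈ A, 4 * setCost A S * setCost A [x] := by
        rw [Finset.mul_sum]
        exact Finset.sum_le_sum fun x _ => hpoint x
    _ = A.card * (setCost A S * (8 * totalVariance A)) := by
        rw [← Finset.mul_sum, sum_setCost_singleton]
        ring

/-- In dimension `0` there may be no set of `k` centers, and then `optCost X k` is the junk value
`0`; a single center already has cost `0` there. -/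
theorem le_optCost {k : ℕ} (hk : 1 ≤ k) {r : ℝ}
    (h : ∀ S : List (EuclideanSpace ℝ (Fin d)), S ≠ [] → S.length ≤ k → r ≤ setCost X S) :
    r ≤ optCost X k := by
  rcases Nat.eq_zero_or_pos d with rfl | hd
  · calc r ≤ setCost X [0] := h _ (List.cons_ne_nil _ _) hk
      _ = 0 := by simp [setCost_singleton, Subsingleton.elim _ (0 : EuclideanSpace ℝ (Fin 0))]
      _ ≤ optCost X k := by
          refine Real.sInf_nonneg ?_
          rintro _ ⟨C, -, -, rfl⟩
          exact setCost_nonneg X _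
  · have : NeZero d := ⟨hd.ne'⟩
    have : Infinite (EuclideanSpace ℝ (Fin d)) := Module.Free.infinite ℝ _
    obtain ⟨C, hC⟩ := Infinite.exists_subset_card_eq (EuclideanSpace ℝ (Fin d)) k
    refine le_csInf ⟨_, C, Finset.card_pos.1 (by omega), hC, rfl⟩ ?_
    rintro _ ⟨C, hne, hcard, rfl⟩
    exact h _ (by simpa using hne.ne_empty) (by simp [hcard])

end Cost

section ExpectedCost

variable {d : ℕ} {X : Finset (EuclideanSpace ℝ (Fin d))} {S : List (EuclideanSpace ℝ (Fin d))}
  {δ : ℝ}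

theorem stepWeight_nonneg (hδ₀ : 0 ≤ δ) (hδ₁ : δ ≤ 1) (S : List (EuclideanSpace ℝ (Fin d)))
    (x : EuclideanSpace ℝ (Fin d)) : 0 ≤ stepWeight X δ S x := by
  have := ptCost_nonneg x S
  have := setCost_nonneg X S
  have : 0 ≤ 1 - δ := sub_nonneg.2 hδ₁
  unfold stepWeight
  positivity

theorem sum_stepWeight_mul (X : Finset (EuclideanSpace ℝ (Fin d))) (δ : ℝ)
    (S : List (EuclideanSpace ℝ (Fin d))) (g : EuclideanSpace ℝ (Fin d) → ℝ) :
    ∑ x ∈ X, stepWeight X δ S x * g x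
      = (1 - δ) * ((∑ x ∈ X, ptCost x S * g x) / setCost X S)
        + δ * ((∑ x ∈ X, g x) / X.card) := by
  simp only [Finset.sum_div, Finset.mul_sum, ← Finset.sum_add_distrib, stepWeight]
  exact Finset.sum_congr rfl fun x _ => by ring

/-- Only an inequality: when `setCost X S = 0`, division by zero leaves a sum of at most `δ`. -/
theorem sum_stepWeight_le_one (hδ₀ : 0 ≤ δ) (hδ₁ : δ ≤ 1) (S : List (EuclideanSpace ℝ (Fin d))) :
    ∑ x ∈ X, stepWeight X δ S x ≤ 1 := by
  have h := sum_stepWeight_mul X δ S fun _ => 1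
  simp only [mul_one, Finset.sum_const, nsmul_eq_mul] at h
  rw [h, ← setCost]
  have := div_self_le_one (setCost X S)
  have := div_self_le_one (X.card : ℝ)
  nlinarith

theorem expCost_antitone (hδ₀ : 0 ≤ δ) (hδ₁ : δ ≤ 1) (hS : S ≠ []) :
    Antitone fun t => expCost X δ t S := by
  refine antitone_nat_of_succ_le fun t => ?_
  induction t generalizing S with
  | zero =>
    calc ∑ x ∈ X, stepWeight X δ S x * setCost X (x :: S)
        ≤ ∑ x ∈ X, stepWeight X δ S x * setCost X S :=
          Finset.sum_le_sum fun x _ =>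
            mul_le_mul_of_nonneg_left (setCost_cons_le x hS) (stepWeight_nonneg hδ₀ hδ₁ S x)
      _ = (∑ x ∈ X, stepWeight X δ S x) * setCost X S := (Finset.sum_mul ..).symm
      _ ≤ setCost X S :=
          mul_le_of_le_one_left (setCost_nonneg X S) (sum_stepWeight_le_one hδ₀ hδ₁ S)
  | succ t ih =>
    exact Finset.sum_le_sum fun x _ =>
      mul_le_mul_of_nonneg_left (ih (List.cons_ne_nil x S)) (stepWeight_nonneg hδ₀ hδ₁ S x)

end ExpectedCost

section Miss

variable {ι : Type*}

theorem card_mul_sum_mul_sub_le (U : Finset ι) (Φ : ι → ℝ) :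
    (U.card : ℝ) * ∑ a ∈ U, Φ a * (∑ b ∈ U, Φ b - Φ a)
      ≤ ((U.card : ℝ) - 1) * (∑ b ∈ U, Φ b) ^ 2 := by
  have hexpand : ∑ a ∈ U, Φ a * (∑ b ∈ U, Φ b - Φ a) = (∑ b ∈ U, Φ b) ^ 2 - ∑ a ∈ U, Φ a ^ 2 := by
    simp only [mul_sub, Finset.sum_sub_distrib, ← Finset.sum_mul, sq]
  have := sq_sum_le_card_mul_sum_sq (s := U) (f := Φ)
  rw [hexpand]
  linarith

theorem one_sub_div_card_nonneg {U : Finset ι} {t : ℕ} (htU : t ≤ U.card) :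
    0 ≤ 1 - (t : ℝ) / U.card :=
  sub_nonneg.2 (div_le_one_of_le₀ (by exact_mod_cast htU) (Nat.cast_nonneg _))

/-- The average of the uncovered term of the potential over a `D²` draw, multiplied by the total
cost `Q + ∑ Φ`: with weight `Q` the draw misses the set `U` of uncovered parts, and with weight
`Φ a` it removes `a` from `U`. -/
theorem miss_add_hit_le {U : Finset ι} {t : ℕ} (ht : t + 1 ≤ U.card) (Q : ℝ) (Φ : ι → ℝ) :
    Q * ((1 - t / U.card) * ∑ b ∈ U, Φ b)
        + ∑ a ∈ U, Φ a * ((1 - t / (U.card - 1)) * (∑ b ∈ U, Φ b - Φ a))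
      ≤ (Q + ∑ b ∈ U, Φ b) * ((1 - (t + 1) / U.card) * ∑ b ∈ U, Φ b + Q / U.card) := by
  have hspread := card_mul_sum_mul_sub_le U Φ
  have ht' : (t : ℝ) + 1 ≤ U.card := by exact_mod_cast ht
  have : (0 : ℝ) ≤ t := t.cast_nonneg
  simp only [mul_left_comm (Φ _), ← Finset.mul_sum]
  set P := ∑ b ∈ U, Φ b
  set R := ∑ a ∈ U, Φ a * (P - Φ a)
  set u := (U.card : ℝ)
  have hu : 0 < u := by linarith
  have hr : 0 ≤ 1 - t / (u - 1) :=
    sub_nonneg.2 (div_le_one_of_le₀ (by linarith) (by linarith))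
  have hratio : (1 - t / (u - 1)) * (u - 1) = u - 1 - t := by
    rcases eq_or_ne (u - 1) 0 with h | h
    · rw [h]
      linarith
    · field_simp
  have hhit : (1 - t / (u - 1)) * R ≤ (1 - (t + 1) / u) * P ^ 2 := by
    refine le_of_mul_le_mul_left ?_ hu
    calc u * ((1 - t / (u - 1)) * R) = (1 - t / (u - 1)) * (u * R) := by ring
      _ ≤ (1 - t / (u - 1)) * ((u - 1) * P ^ 2) := by gcongr
      _ = (u - 1 - t) * P ^ 2 := by rw [← mul_assoc, hratio]
      _ = u * ((1 - (t + 1) / u) * P ^ 2) := by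
          field_simp
          ring
  calc Q * ((1 - t / u) * P) + (1 - t / (u - 1)) * R
      ≤ Q * ((1 - t / u) * P) + (1 - (t + 1) / u) * P ^ 2 + Q ^ 2 / u := by
        have : 0 ≤ Q ^ 2 / u := by positivity
        linarith
    _ = (Q + P) * ((1 - (t + 1) / u) * P + Q / u) := by ring

end Miss

section Potential

variable {d : ℕ} [DecidableEq (EuclideanSpace ℝ (Fin d))] {X : Finset (EuclideanSpace ℝ (Fin d))}
  {S : List (EuclideanSpace ℝ (Fin d))} {P : Finpartition X} {δ : ℝ} {t : ℕ}
  {U : Finset (Finset (EuclideanSpace ℝ (Fin d)))} {A : Finset (EuclideanSpace ℝ (Fin d))}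

theorem sum_parts_sum {α M : Type*} [DecidableEq α] [AddCommMonoid M] {s : Finset α}
    (P : Finpartition s) (g : α → M) : ∑ A ∈ P.parts, ∑ x ∈ A, g x = ∑ x ∈ s, g x := by
  conv_rhs => rw [← P.biUnion_parts, Finset.sum_biUnion P.disjoint]
  rfl

theorem sum_parts_setCost (P : Finpartition X) (S : List (EuclideanSpace ℝ (Fin d))) :
    ∑ A ∈ P.parts, setCost A S = setCost X S :=
  sum_parts_sum P _

theorem harmonic_nonneg (n : ℕ) : 0 ≤ (harmonic n : ℝ) := by
  rw [harmonic]
  positivity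

/-- The covered cost, for a set `U` of parts of `P` regarded as uncovered: the current cost of the
parts outside `U`, and the cost `8 Δ₁(A)` that a part `A` in `U` keeps once it has been hit. -/
noncomputable def settledCost (P : Finpartition X)
    (U : Finset (Finset (EuclideanSpace ℝ (Fin d)))) (S : List (EuclideanSpace ℝ (Fin d))) : ℝ :=
  ∑ A ∈ P.parts \ U, setCost A S + 8 * ∑ A ∈ U, totalVariance A

theorem settledCost_cons_le (hS : S ≠ []) (x : EuclideanSpace ℝ (Fin d)) :
    settledCost P U (x :: S) ≤ settledCost P U S := by
  unfold settledCost
  gcongr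
  exact setCost_cons_le x hS

theorem sum_sdiff_setCost_le_settledCost :
    ∑ A ∈ P.parts \ U, setCost A S ≤ settledCost P U S :=
  le_add_of_nonneg_right
    (mul_nonneg (by norm_num) (Finset.sum_nonneg fun A _ => totalVariance_nonneg A))

theorem settledCost_nonneg : 0 ≤ settledCost P U S :=
  (Finset.sum_nonneg fun A _ => setCost_nonneg A S).trans sum_sdiff_setCost_le_settledCost

theorem settledCost_erase (hU : U ⊆ P.parts) (hA : A ∈ U) :
    settledCost P (U.erase A) S = settledCost P U S + (setCost A S - 8 * totalVariance A) := by
  rw [settledCost, Finset.sdiff_erase (hU hA), Finset.sum_insert (by simp [hA]),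
    Finset.sum_erase_eq_sub hA, settledCost]
  ring

/-- An upper bound for the expected cost after `t` more steps from the centers `S`, where `U` is a
set of at least `t` parts of `P` regarded as uncovered. The second term is the cost that remains
because `t` draws cannot reach more than a share `t / |U|` of the parts in `U`. -/
noncomputable def potential (P : Finpartition X) (δ : ℝ) (t : ℕ)
    (U : Finset (Finset (EuclideanSpace ℝ (Fin d)))) (S : List (EuclideanSpace ℝ (Fin d))) : ℝ :=
  settledCost P U S * (1 + harmonic t)
    + (1 - t / U.card) * ∑ A ∈ U, setCost A S + δ * t * setCost X S

theorem setCost_le_potential_zero (hU : U ⊆ P.parts) : setCost X S ≤ potential P δ 0 U S := by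
  rw [← sum_parts_setCost P S, ← Finset.sum_sdiff hU]
  simpa [potential] using sum_sdiff_setCost_le_settledCost

theorem potential_card (P : Finpartition X) (δ : ℝ)
    (U : Finset (Finset (EuclideanSpace ℝ (Fin d)))) (S : List (EuclideanSpace ℝ (Fin d))) :
    potential P δ U.card U S
      = settledCost P U S * (1 + harmonic U.card) + δ * U.card * setCost X S := by
  rcases U.eq_empty_or_nonempty with rfl | hU
  · simp [potential]
  · have hn : (U.card : ℝ) ≠ 0 := by exact_mod_cast hU.card_ne_zero
    rw [potential, div_self hn, sub_self, zero_mul, add_zero]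

theorem potential_nonneg (hδ₀ : 0 ≤ δ) (htU : t ≤ U.card) : 0 ≤ potential P δ t U S := by
  have := one_sub_div_card_nonneg htU
  have := harmonic_nonneg t
  have := setCost_nonneg X S
  have := settledCost_nonneg (P := P) (U := U) (S := S)
  have : 0 ≤ ∑ A ∈ U, setCost A S := Finset.sum_nonneg fun A _ => setCost_nonneg A S
  unfold potential
  positivity

theorem potential_cons_le (hδ₀ : 0 ≤ δ) (hS : S ≠ []) (htU : t ≤ U.card)
    (x : EuclideanSpace ℝ (Fin d)) : potential P δ t U (x :: S) ≤ potential P δ t U S := by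
  have hshare := one_sub_div_card_nonneg htU
  have hH := harmonic_nonneg t
  unfold potential
  gcongr
  exacts [settledCost_cons_le hS x, setCost_cons_le x hS, setCost_cons_le x hS]

theorem potential_erase_cons_le (hδ₀ : 0 ≤ δ) (hS : S ≠ []) (hU : U ⊆ P.parts) (hA : A ∈ U)
    (htA : t ≤ (U.erase A).card) (x : EuclideanSpace ℝ (Fin d)) :
    potential P δ t (U.erase A) (x :: S)
      ≤ (settledCost P U S + (setCost A (x :: S) - 8 * totalVariance A)) * (1 + harmonic t)
        + (1 - t / (U.erase A).card) * ∑ B ∈ U.erase A, setCost B S + δ * t * setCost X S := by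
  have hshare := one_sub_div_card_nonneg htA
  have hH := harmonic_nonneg t
  rw [potential, settledCost_erase hU hA]
  gcongr
  exacts [settledCost_cons_le hS x, setCost_cons_le x hS, setCost_cons_le x hS]

theorem sum_ptCost_mul_potential_cons_le (hδ₀ : 0 ≤ δ) (hS : S ≠ []) (htU : t ≤ U.card)
    (A : Finset (EuclideanSpace ℝ (Fin d))) :
    ∑ x ∈ A, ptCost x S * potential P δ t U (x :: S) ≤ setCost A S * potential P δ t U S := by
  rw [setCost, Finset.sum_mul]
  exact Finset.sum_le_sum fun x _ =>
    mul_le_mul_of_nonneg_left (potential_cons_le hδ₀ hS htU x) (ptCost_nonneg x S)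

theorem sum_ptCost_mul_potential_erase_cons_le (hδ₀ : 0 ≤ δ) (hS : S ≠ []) (hU : U ⊆ P.parts)
    (hA : A ∈ U) (htA : t ≤ (U.erase A).card) :
    ∑ x ∈ A, ptCost x S * potential P δ t (U.erase A) (x :: S)
      ≤ setCost A S * (settledCost P U S * (1 + harmonic t)
          + (1 - t / (U.erase A).card) * ∑ B ∈ U.erase A, setCost B S + δ * t * setCost X S) := by
  set M := settledCost P U S * (1 + harmonic t)
    + (1 - t / (U.erase A).card) * ∑ B ∈ U.erase A, setCost B S + δ * t * setCost X S with hM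
  have hH := harmonic_nonneg t
  have hcost : setCost A S = ∑ x ∈ A, ptCost x S := rfl
  calc ∑ x ∈ A, ptCost x S * potential P δ t (U.erase A) (x :: S)
      ≤ ∑ x ∈ A, ptCost x S
          * (M + (setCost A (x :: S) - 8 * totalVariance A) * (1 + harmonic t)) := by
        refine Finset.sum_le_sum fun x _ => mul_le_mul_of_nonneg_left ?_ (ptCost_nonneg x S)
        refine (potential_erase_cons_le hδ₀ hS hU hA htA x).trans (le_of_eq ?_)
        rw [hM]
        ring
    _ = setCost A S * M + (∑ x ∈ A, ptCost x S * setCost A (x :: S)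
          - setCost A S * (8 * totalVariance A)) * (1 + harmonic t) := by
        rw [hcost]
        simp only [Finset.sum_mul, ← Finset.sum_sub_distrib, ← Finset.sum_add_distrib]
        exact Finset.sum_congr rfl fun x _ => by ring
    _ ≤ setCost A S * M :=
        add_le_of_nonpos_right (mul_nonpos_of_nonpos_of_nonneg
          (sub_nonpos.2 (sum_ptCost_mul_setCost_cons_le A hS)) (by positivity))

theorem sum_ptCost_mul_le (hδ₀ : 0 ≤ δ) (hS : S ≠ []) (hU : U ⊆ P.parts) (htU : t + 1 ≤ U.card)
    {g : EuclideanSpace ℝ (Fin d) → ℝ}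
    (hg : ∀ x, ∀ W ⊆ P.parts, t ≤ W.card → g x ≤ potential P δ t W (x :: S)) :
    ∑ x ∈ X, ptCost x S * g x
      ≤ setCost X S * (settledCost P U S * (1 + harmonic t)
          + ((1 - (t + 1) / U.card) * ∑ A ∈ U, setCost A S
            + (∑ A ∈ P.parts \ U, setCost A S) / U.card)
          + δ * t * setCost X S) := by
  have hbound (W) (hW : W ⊆ P.parts) (htW : t ≤ W.card) (A : Finset (EuclideanSpace ℝ (Fin d))) :
      ∑ x ∈ A, ptCost x S * g x ≤ ∑ x ∈ A, ptCost x S * potential P δ t W (x :: S) :=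
    Finset.sum_le_sum fun x _ => mul_le_mul_of_nonneg_left (hg x W hW htW) (ptCost_nonneg x S)
  have hcovered (A) (_ : A ∈ P.parts \ U) :
      ∑ x ∈ A, ptCost x S * g x ≤ setCost A S * potential P δ t U S :=
    (hbound U hU (by omega) A).trans (sum_ptCost_mul_potential_cons_le hδ₀ hS (by omega) A)
  have huncovered (A) (hA : A ∈ U) :
      ∑ x ∈ A, ptCost x S * g x ≤ setCost A S * (settledCost P U S * (1 + harmonic t)
        + (1 - t / (U.card - 1)) * (∑ B ∈ U, setCost B S - setCost A S)
        + δ * t * setCost X S) := by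
    have htA : t ≤ (U.erase A).card := by
      rw [Finset.card_erase_of_mem hA]
      omega
    rw [← Finset.cast_card_erase_of_mem hA, ← Finset.sum_erase_eq_sub hA]
    exact (hbound _ ((U.erase_subset A).trans hU) htA A).trans
      (sum_ptCost_mul_potential_erase_cons_le hδ₀ hS hU hA htA)
  have hmiss := miss_add_hit_le htU (∑ A ∈ P.parts \ U, setCost A S) (setCost · S)
  have hsplit := Finset.sum_sdiff hU (f := fun A => setCost A S)
  rw [sum_parts_setCost] at hsplit
  rw [← sum_parts_sum P, ← Finset.sum_sdiff hU]
  refine (add_le_add (Finset.sum_le_sum hcovered) (Finset.sum_le_sum huncovered)).trans ?_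
  simp only [potential, mul_add (setCost _ S), Finset.sum_add_distrib, ← Finset.sum_mul]
  rw [hsplit] at hmiss
  linear_combination hmiss + (settledCost P U S * (1 + harmonic t) + δ * t * setCost X S) * hsplit

theorem step_potential_le (hδ₀ : 0 ≤ δ) (hU : U ⊆ P.parts) (htU : t + 1 ≤ U.card) :
    (1 - δ) * (settledCost P U S * (1 + harmonic t)
          + ((1 - (t + 1) / U.card) * ∑ A ∈ U, setCost A S
            + (∑ A ∈ P.parts \ U, setCost A S) / U.card)
          + δ * t * setCost X S)
        + δ * potential P δ t U S
      ≤ potential P δ (t + 1) U S := by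
  have htU' : (t : ℝ) + 1 ≤ U.card := by exact_mod_cast htU
  have hcard : (1 : ℝ) ≤ U.card := by exact_mod_cast (by omega : 1 ≤ U.card)
  have hmiss : (1 - δ) * ((∑ A ∈ P.parts \ U, setCost A S) / U.card)
      ≤ settledCost P U S / (t + 1) :=
    calc (1 - δ) * ((∑ A ∈ P.parts \ U, setCost A S) / U.card)
        ≤ (∑ A ∈ P.parts \ U, setCost A S) / U.card :=
          mul_le_of_le_one_left
            (div_nonneg (Finset.sum_nonneg fun A _ => setCost_nonneg A S) (Nat.cast_nonneg _))
            (by linarith)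
      _ ≤ settledCost P U S / (t + 1) :=
          div_le_div₀ settledCost_nonneg sum_sdiff_setCost_le_settledCost (by positivity) htU'
  have hunif : δ * ((∑ A ∈ U, setCost A S) / U.card) ≤ δ * setCost X S := by
    gcongr
    refine (div_le_self (Finset.sum_nonneg fun A _ => setCost_nonneg A S) hcard).trans ?_
    rw [← sum_parts_setCost P S]
    exact Finset.sum_le_sum_of_subset_of_nonneg hU fun A _ _ => setCost_nonneg A S
  simp only [potential, harmonic_succ]
  push_cast
  linear_combination hmiss + hunif

/-- In the induction step, a `D²` draw that falls into a part in `U` removes this part from `U`,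
while a uniform draw is treated as a miss, leaving `U` as it is. -/
theorem expCost_le_potential (hδ₀ : 0 ≤ δ) (hδ₁ : δ ≤ 1) (hS : S ≠ []) (hU : U ⊆ P.parts)
    (htU : t ≤ U.card) : expCost X δ t S ≤ potential P δ t U S := by
  induction t generalizing S U with
  | zero => exact setCost_le_potential_zero hU
  | succ t ih =>
    have hg (x) (W) (hW : W ⊆ P.parts) (htW : t ≤ W.card) :
        expCost X δ t (x :: S) ≤ potential P δ t W (x :: S) :=
      ih (List.cons_ne_nil x S) hW htW
    rcases (setCost_nonneg X S).eq_or_lt with hzero | hpos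
    · calc expCost X δ (t + 1) S ≤ setCost X S := expCost_antitone hδ₀ hδ₁ hS (Nat.zero_le _)
        _ = 0 := hzero.symm
        _ ≤ potential P δ (t + 1) U S := potential_nonneg hδ₀ htU
    have hdraw := (div_le_iff₀' hpos).2 (sum_ptCost_mul_le hδ₀ hS hU htU hg)
    have hunif : (∑ x ∈ X, expCost X δ t (x :: S)) / X.card ≤ potential P δ t U S := by
      refine div_le_of_le_mul₀ (Nat.cast_nonneg _) (potential_nonneg hδ₀ (by omega)) ?_
      rw [mul_comm, ← nsmul_eq_mul]
      exact Finset.sum_le_card_nsmul _ _ _ fun x _ =>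
        (hg x U hU (by omega)).trans (potential_cons_le hδ₀ hS (by omega) x)
    rw [expCost, sum_stepWeight_mul]
    refine le_trans ?_ (step_potential_le hδ₀ hU htU)
    have := sub_nonneg.2 hδ₁
    gcongr

end Potential

section Guarantee

variable {d : ℕ} {X : Finset (EuclideanSpace ℝ (Fin d))} {δ : ℝ}

theorem sum_expCost_le_of_mem_parts [DecidableEq (EuclideanSpace ℝ (Fin d))] {P : Finpartition X}
    {A : Finset (EuclideanSpace ℝ (Fin d))} (hδ₀ : 0 ≤ δ) (hδ₁ : δ ≤ 1) (hA : A ∈ P.parts) :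
    ∑ c ∈ A, expCost X δ (P.parts.card - 1) [c]
      ≤ A.card * (8 * (∑ B ∈ P.parts, totalVariance B) * (1 + harmonic (P.parts.card - 1)))
        + δ * (P.parts.card - 1) * ∑ c ∈ A, setCost X [c] := by
  have hcard : (P.parts.erase A).card = P.parts.card - 1 := Finset.card_erase_of_mem hA
  have hfirst (c : EuclideanSpace ℝ (Fin d)) : expCost X δ (P.parts.card - 1) [c]
      ≤ (8 * ∑ B ∈ P.parts, totalVariance B + (setCost A [c] - 8 * totalVariance A))
          * (1 + harmonic (P.parts.card - 1))
        + δ * (P.parts.card - 1) * setCost X [c] := by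
    have h := expCost_le_potential hδ₀ hδ₁ (List.cons_ne_nil c []) (P.parts.erase_subset A) le_rfl
    rwa [potential_card, settledCost_erase subset_rfl hA, settledCost, sdiff_self,
      Finset.bot_eq_empty, Finset.sum_empty, zero_add, Finset.cast_card_erase_of_mem hA,
      hcard] at h
  have hH := harmonic_nonneg (P.parts.card - 1)
  have hV := totalVariance_nonneg A
  calc ∑ c ∈ A, expCost X δ (P.parts.card - 1) [c]
      ≤ (A.card * (8 * ∑ B ∈ P.parts, totalVariance B)
            + (2 * A.card * totalVariance A - A.card * (8 * totalVariance A)))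
          * (1 + harmonic (P.parts.card - 1))
        + δ * (P.parts.card - 1) * ∑ c ∈ A, setCost X [c] := by
        refine (Finset.sum_le_sum fun c _ => hfirst c).trans (le_of_eq ?_)
        simp only [Finset.sum_add_distrib, Finset.sum_sub_distrib, ← Finset.sum_mul,
          ← Finset.mul_sum, Finset.sum_const, nsmul_eq_mul, sum_setCost_singleton]
        ring
    _ ≤ A.card * (8 * ∑ B ∈ P.parts, totalVariance B) * (1 + harmonic (P.parts.card - 1))
        + δ * (P.parts.card - 1) * ∑ c ∈ A, setCost X [c] := by
        gcongr
        nlinarith [mul_nonneg A.card.cast_nonneg (α := ℝ) hV]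
    _ = _ := by ring

theorem mean_expCost_le_of_finpartition [DecidableEq (EuclideanSpace ℝ (Fin d))]
    (P : Finpartition X) (hX : X.Nonempty) (hδ₀ : 0 ≤ δ) (hδ₁ : δ ≤ 1) :
    (X.card : ℝ)⁻¹ * ∑ c ∈ X, expCost X δ (P.parts.card - 1) [c]
      ≤ 8 * (∑ A ∈ P.parts, totalVariance A) * (1 + harmonic (P.parts.card - 1))
        + 2 * (P.parts.card - 1) * δ * totalVariance X := by
  have hn : (0 : ℝ) < X.card := by exact_mod_cast hX.card_pos
  rw [inv_mul_le_iff₀ hn]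
  calc ∑ c ∈ X, expCost X δ (P.parts.card - 1) [c]
      ≤ ∑ A ∈ P.parts,
          (A.card * (8 * (∑ B ∈ P.parts, totalVariance B) * (1 + harmonic (P.parts.card - 1)))
            + δ * (P.parts.card - 1) * ∑ c ∈ A, setCost X [c]) := by
        rw [← sum_parts_sum P]
        exact Finset.sum_le_sum fun A hA => sum_expCost_le_of_mem_parts hδ₀ hδ₁ hA
    _ = X.card * (8 * (∑ A ∈ P.parts, totalVariance A) * (1 + harmonic (P.parts.card - 1)))
          + δ * (P.parts.card - 1) * (2 * X.card * totalVariance X) := by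
        rw [Finset.sum_add_distrib, ← Finset.sum_mul, ← Finset.mul_sum, ← Nat.cast_sum,
          P.sum_card_parts, sum_parts_sum P, sum_setCost_singleton]
    _ = _ := by ring

theorem exists_finpartition_card_le_length [DecidableEq (EuclideanSpace ℝ (Fin d))]
    (X : Finset (EuclideanSpace ℝ (Fin d))) {S : List (EuclideanSpace ℝ (Fin d))} (hS : S ≠ []) :
    ∃ P : Finpartition X,
      P.parts.card ≤ S.length ∧ ∑ A ∈ P.parts, totalVariance A ≤ setCost X S := by
  choose f hfS hf using fun x => exists_ptCost_eq x hS
  let P := Finpartition.ofSetSetoid (Setoid.ker f) X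
  refine ⟨P, ?_, ?_⟩
  · have hparts : P.parts ⊆ S.toFinset.image fun c => {x ∈ X | c = f x} := by
      intro A hA
      obtain ⟨x, -, rfl⟩ := Finset.mem_image.1 hA
      exact Finset.mem_image.2 ⟨f x, List.mem_toFinset.2 (hfS x), rfl⟩
    exact (Finset.card_le_card hparts).trans (Finset.card_image_le.trans S.toFinset_card_le)
  · rw [← sum_parts_setCost P S]
    refine Finset.sum_le_sum fun A hA => ?_
    obtain ⟨x, -, rfl⟩ := Finset.mem_image.1 hA
    refine (totalVariance_le_sum_norm_sub_sq _ (f x)).trans (Finset.sum_le_sum fun y hy => ?_)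
    have hxy : f x = f y := (Finset.mem_filter.1 hy).2
    rw [hf y, hxy]

theorem harmonic_le_one_add_log_of_le {m k : ℕ} (hmk : m ≤ k) :
    (harmonic m : ℝ) ≤ 1 + Real.log k := by
  rcases m.eq_zero_or_pos with rfl | hm
  · have := Real.log_natCast_nonneg k
    simp only [harmonic_zero, Rat.cast_zero]
    positivity
  · refine (harmonic_le_one_add_log m).trans ?_
    gcongr

theorem mean_expCost_le_setCost (hX : X.Nonempty) (hδ₀ : 0 ≤ δ) (hδ₁ : δ ≤ 1) {k : ℕ}
    {S : List (EuclideanSpace ℝ (Fin d))} (hS : S ≠ []) (hSk : S.length ≤ k) :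
    (X.card : ℝ)⁻¹ * ∑ c ∈ X, expCost X δ (k - 1) [c]
      ≤ 8 * (Real.log k + 2) * setCost X S + 2 * (k - 1) * δ * totalVariance X := by
  classical
  obtain ⟨P, hPS, hcost⟩ := exists_finpartition_card_le_length X hS
  have hPk : P.parts.card ≤ k := hPS.trans hSk
  have hH := harmonic_nonneg (P.parts.card - 1)
  have hlog : 1 + (harmonic (P.parts.card - 1) : ℝ) ≤ Real.log k + 2 := by
    linarith [harmonic_le_one_add_log_of_le ((Nat.sub_le _ 1).trans hPk)]
  calc (X.card : ℝ)⁻¹ * ∑ c ∈ X, expCost X δ (k - 1) [c]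
      ≤ (X.card : ℝ)⁻¹ * ∑ c ∈ X, expCost X δ (P.parts.card - 1) [c] := by
        gcongr with c
        exact expCost_antitone hδ₀ hδ₁ (List.cons_ne_nil c []) (Nat.sub_le_sub_right hPk 1)
    _ ≤ 8 * (∑ A ∈ P.parts, totalVariance A) * (1 + harmonic (P.parts.card - 1))
          + 2 * (P.parts.card - 1) * δ * totalVariance X :=
        mean_expCost_le_of_finpartition P hX hδ₀ hδ₁
    _ ≤ 8 * setCost X S * (Real.log k + 2) + 2 * (k - 1) * δ * totalVariance X := by
        have := setCost_nonneg X S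
        have := totalVariance_nonneg X
        gcongr
    _ = _ := by ring

theorem delta_kmeanspp_guarantee_general (hX : X.Nonempty) {k : ℕ} (hk : 1 ≤ k) (hδ₀ : 0 ≤ δ)
    (hδ₁ : δ ≤ 1) :
    (X.card : ℝ)⁻¹ * ∑ c ∈ X, expCost X δ (k - 1) [c]
      ≤ 8 * (Real.log k + 2) * optCost X k + 2 * (k - 1) * δ * totalVariance X := by
  have hlog : 0 < 8 * (Real.log k + 2) := by
    linarith [Real.log_natCast_nonneg k]
  rw [← sub_le_iff_le_add, ← div_le_iff₀' hlog]
  refine le_optCost hk fun S hS hSk => ?_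
  rw [div_le_iff₀' hlog, sub_le_iff_le_add]
  exact mean_expCost_le_setCost hX hδ₀ hδ₁ hS hSk

theorem two_mul_sub_one_mul_le_div {k : ℝ} (hk : 1 ≤ k) (hδ₀ : 0 ≤ δ) (hδ₁ : δ < 1) :
    2 * (k - 1) * δ ≤ 6 * k * δ / (1 - δ) :=
  calc 2 * (k - 1) * δ ≤ 6 * k * δ := by gcongr <;> linarith
    _ ≤ 6 * k * δ / (1 - δ) := le_div_self (by positivity) (by linarith) (by linarith)

end Guarantee

/-- Guarantee of `δ`-`k`-means++ (first center uniform, subsequent centers via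
the `δ`-perturbed `D²` distribution):
`E[Δ(X,S)] ≤ 8(ln k + 2)·Δ_k(X) + (6kδ/(1-δ))·Δ₁(X)`. -/
theorem delta_kmeanspp_guarantee {d : ℕ} (X : Finset (EuclideanSpace ℝ (Fin d)))
    (hX : X.Nonempty) (k : ℕ) (hk : 1 ≤ k)
    (δ : ℝ) (hδ₀ : 0 < δ) (hδ₁ : δ < 1 / 2) :
    (X.card : ℝ)⁻¹ * ∑ c ∈ X, expCost X δ (k - 1) [c]
      ≤ 8 * (Real.log k + 2) * optCost X k
        + (6 * k * δ / (1 - δ)) * ∑ x ∈ X, ‖x - (X.card : ℝ)⁻¹ • ∑ y ∈ X, y‖ ^ 2 := by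
  exact (delta_kmeanspp_guarantee_general hX hk hδ₀.le (by linarith)).trans <| add_le_add_right
    (mul_le_mul_of_nonneg_right (two_mul_sub_one_mul_le_div (by exact_mod_cast hk) hδ₀.le
      (by linarith)) (totalVariance_nonneg X)) _
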